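/- Let n ≥ 2 be an integer and let (q_1, …, q_{n−1}) ∈ [0,1)^{n−1} be a tuple of real numbers such that ∑_{i=r}^{s} q_i ∉ ℤ for every 1 ≤ r ≤ s ≤ n−1. Then there exists a unique tuple (k_1, …, k_{n−1}) of integers with each k_i ∈ {1, …, n−1}, such that n does not divide ∑_{i=r}^{s} k_i for all 1 ≤ r ≤ s ≤ n−1, and such that ⌈∑_{i=r}^{s} q_i⌉ = ⌈∑_{i=r}^{s} k_i/n⌉ for all 1 ≤ r ≤ s ≤ n−1. -/

import Mathlib

/-!
Put `S j = q_1 + ⋯ + q_j` for `0 ≤ j ≤ n - 1`, so that the sums over intervals are the differences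
`S b - S a` with `a < b`. Since
`⌈S b - S a⌉ = ⌊S b⌋ - ⌊S a⌋ + [fract (S a) < fract (S b)]` and `S 0 = 0`, a chamber amounts to the
floors `⌊S j⌋` together with the order of the `n` distinct fractional parts. For an integral point
with partial sums `K j`, these data are the quotients `K j / n` and the order of the residues
`K j % n`. As `n` distinct residues exhaust `{0, …, n - 1}`, each of them equals its rank, which
forces `K j = n * ⌊S j⌋ + rank (fract (S j))`.
-/

open Finset Function

section CeilSub

variable {R : Type*} [CommRing R] [LinearOrder R] [IsStrictOrderedRing R] [FloorRing R]

theorem ceil_sub_eq_floor_sub_floor_add_ite (x y : R) :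
    ⌈y - x⌉ = ⌊y⌋ - ⌊x⌋ + if Int.fract x < Int.fract y then 1 else 0 := by
  have hx := Int.floor_add_fract x
  have hy := Int.floor_add_fract y
  have hx₀ := Int.fract_nonneg x
  have hy₀ := Int.fract_nonneg y
  have hx₁ := Int.fract_lt_one x
  have hy₁ := Int.fract_lt_one y
  rw [Int.ceil_eq_iff]
  split_ifs <;> push_cast <;> constructor <;> linarith

theorem ceil_sub_eq_ceil_sub_iff {x y x' y' : R} (hx : ⌊x⌋ = ⌊x'⌋) (hy : ⌊y⌋ = ⌊y'⌋) :
    ⌈y - x⌉ = ⌈y' - x'⌉ ↔ (Int.fract x < Int.fract y ↔ Int.fract x' < Int.fract y') := by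
  rw [ceil_sub_eq_floor_sub_floor_add_ite, ceil_sub_eq_floor_sub_floor_add_ite, hx, hy]
  split_ifs <;> simp only [*, add_zero, add_eq_left, left_eq_add, one_ne_zero, iff_true, iff_false,
    not_true, iff_self]

theorem floor_eq_floor_of_ceil_eq_ceil {x y : R} (hx : Int.fract x ≠ 0) (hy : Int.fract y ≠ 0)
    (h : ⌈x⌉ = ⌈y⌉) : ⌊x⌋ = ⌊y⌋ := by
  rw [Int.fract_ne_zero_iff, ← Int.ceil_eq_floor_add_one_iff_notMem] at hx hy
  lia

end CeilSub

section Order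

variable {ι α β : Type*} [LinearOrder α] {f : ι → α} {g : ι → β}

theorem lt_iff_lt_of_forall_lt [LinearOrder ι] [LinearOrder β] (hf : Injective f) (hg : Injective g)
    (h : ∀ a b, a < b → (f a < f b ↔ g a < g b)) (a b : ι) : f a < f b ↔ g a < g b := by
  rcases lt_trichotomy a b with hab | rfl | hba
  · exact h a b hab
  · simp only [lt_irrefl]
  · rw [← not_iff_not, not_lt, not_lt, (hf.ne hba.ne).le_iff_lt, (hg.ne hba.ne).le_iff_lt,
      h b a hba]

theorem injective_of_lt_iff_lt [Preorder β] (hf : Injective f)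
    (h : ∀ a b, f a < f b ↔ g a < g b) : Injective g := by
  refine fun a b hab => hf (le_antisymm ?_ ?_) <;>
    exact not_lt.mp fun hlt => ((h _ _).mp hlt).ne (by simp only [hab])

end Order

section Chamber

variable {ι R : Type*} [LinearOrder ι] [CommRing R] [LinearOrder R] [IsStrictOrderedRing R]
  [FloorRing R] {S T : ι → R}

theorem forall_lt_ceil_sub_eq_iff [OrderBot ι] (hS₀ : S ⊥ = 0) (hT₀ : T ⊥ = 0)
    (hS : Injective fun a => Int.fract (S a)) (hT : Injective fun a => Int.fract (T a)) :
    (∀ a b, a < b → ⌈S b - S a⌉ = ⌈T b - T a⌉) ↔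
      (∀ a, ⌊S a⌋ = ⌊T a⌋) ∧
        ∀ a b, Int.fract (S a) < Int.fract (S b) ↔ Int.fract (T a) < Int.fract (T b) := by
  refine ⟨fun h => ?_, fun ⟨hfloor, hfract⟩ a b _ =>
    (ceil_sub_eq_ceil_sub_iff (hfloor a) (hfloor b)).mpr (hfract a b)⟩
  have hfloor (a : ι) : ⌊S a⌋ = ⌊T a⌋ := by
    rcases eq_bot_or_bot_lt a with rfl | ha
    · rw [hS₀, hT₀]
    · refine floor_eq_floor_of_ceil_eq_ceil ?_ ?_ ?_
      · simpa [hS₀] using hS.ne ha.ne'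
      · simpa [hT₀] using hT.ne ha.ne'
      · simpa [hS₀, hT₀] using h ⊥ a ha
  exact ⟨hfloor, lt_iff_lt_of_forall_lt hS hT fun a b hab =>
    (ceil_sub_eq_ceil_sub_iff (hfloor a) (hfloor b)).mp (h a b hab)⟩

theorem injective_fract_iff :
    (Injective fun a => Int.fract (S a)) ↔ ∀ a b, a < b → ¬ ∃ z : ℤ, S b - S a = z := by
  refine ⟨fun h a b hab ⟨z, hz⟩ => hab.ne' (h (Int.fract_eq_fract.mpr ⟨z, hz⟩)), fun h => ?_⟩
  exact .of_lt_imp_ne fun a b hab hfract => h a b hab (Int.fract_eq_fract.mp hfract.symm)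

end Chamber

section Rank

variable {ι α β : Type*} [Fintype ι] [LinearOrder α] [LinearOrder β]

/-- The rank of `f a` in the increasing order of the values of `f`, counted from `0` and with
multiplicity. -/
def valueRank (f : ι → α) (a : ι) : ℕ :=
  #{i | f i < f a}

theorem valueRank_lt_card (f : ι → α) (a : ι) : valueRank f a < Fintype.card ι :=
  card_lt_univ_of_notMem (x := a) (by simp)

theorem valueRank_congr {f : ι → α} {g : ι → β} (h : ∀ a b, f a < f b ↔ g a < g b) :
    valueRank f = valueRank g := by
  ext a
  simp only [valueRank, h]

theorem valueRank_lt_valueRank_iff {f : ι → α} {a b : ι} :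
    valueRank f a < valueRank f b ↔ f a < f b := by
  have mono {a b : ι} (hab : f a ≤ f b) : valueRank f a ≤ valueRank f b :=
    card_le_card <| monotone_filter_right univ fun _ _ hi => hi.trans_le hab
  refine ⟨fun h => not_le.mp fun hba => h.not_ge (mono hba), fun h => card_lt_card ?_⟩
  rw [ssubset_iff_of_subset (monotone_filter_right univ fun _ _ hi => hi.trans h)]
  exact ⟨a, by simpa using h, by simp⟩

theorem valueRank_eq_self {d : ι → ℤ} (hd : Injective d)
    (hmem : ∀ a, d a ∈ Ico (0 : ℤ) (Fintype.card ι)) (a : ι) : (valueRank d a : ℤ) = d a := by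
  have himage : univ.image d = Ico (0 : ℤ) (Fintype.card ι) := by
    refine eq_of_subset_of_card_le (by simpa [image_subset_iff] using hmem) ?_
    simp [card_image_of_injective _ hd]
  have hbelow : ({i | d i < d a} : Finset ι).image d = Ico 0 (d a) := by
    rw [← filter_image (p := (· < d a)), himage, Ico_filter_lt,
      min_eq_right (mem_Ico.mp (hmem a)).2.le]
  rw [valueRank, ← card_image_of_injective _ hd, hbelow, Int.card_Ico, sub_zero,
    Int.toNat_of_nonneg (mem_Ico.mp (hmem a)).1]

end Rank

section Residues

variable {ι : Type*}

theorem injective_emod_iff [LinearOrder ι] {n : ℤ} {K : ι → ℤ} :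
    (Injective fun a => K a % n) ↔ ∀ a b, a < b → ¬ n ∣ K b - K a := by
  refine ⟨fun h a b hab hdvd => hab.ne (h (Int.modEq_iff_dvd.mpr hdvd)), fun h => ?_⟩
  exact .of_lt_imp_ne fun a b hab hmod => h a b hab (Int.modEq_iff_dvd.mp hmod)

variable {R : Type*} [Field R] [LinearOrder R] [IsStrictOrderedRing R] [FloorRing R] {n : ℕ}

theorem fract_intCast_div_lt_iff (hn : 0 < n) {x y : ℤ} :
    Int.fract ((x : R) / n) < Int.fract ((y : R) / n) ↔ x % n < y % n := by
  rw [Int.fract_div_intCast_eq_div_intCast_mod, Int.fract_div_intCast_eq_div_intCast_mod,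
    div_lt_div_iff_of_pos_right (by exact_mod_cast hn), Int.cast_lt]

theorem injective_fract_intCast_div (hn : 0 < n) {K : ι → ℤ} (hK : Injective fun a => K a % n) :
    Injective fun a => Int.fract ((K a : R) / n) :=
  injective_of_lt_iff_lt hK fun _ _ => (fract_intCast_div_lt_iff hn).symm

theorem one_le_and_le_sub_one_of_ceil_eq_ceil_div (hn : 0 < n) {x : R} {k : ℤ} (hx₀ : 0 ≤ x)
    (hx₁ : x < 1) (hx : ¬ ∃ z : ℤ, x = z) (hdvd : ¬ (n : ℤ) ∣ k) (hceil : ⌈x⌉ = ⌈(k : R) / n⌉) :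
    1 ≤ k ∧ k ≤ (n : ℤ) - 1 := by
  have hn' : (0 : R) < n := by exact_mod_cast hn
  have hx_pos : 0 < x := hx₀.lt_of_ne' fun h => hx ⟨0, by rw [h, Int.cast_zero]⟩
  have hceil_x : ⌈x⌉ = 1 := Int.ceil_eq_iff.mpr (by simpa using ⟨hx_pos, hx₁.le⟩)
  rw [hceil_x, eq_comm, Int.ceil_eq_iff, Int.cast_one, sub_self, div_pos_iff_of_pos_right hn',
    div_le_one hn'] at hceil
  have hk_pos : 0 < k := by exact_mod_cast hceil.1
  have hk_le : k ≤ n := by exact_mod_cast hceil.2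
  exact ⟨hk_pos, Int.le_sub_one_of_lt (hk_le.lt_of_ne fun h => hdvd (dvd_of_eq h.symm))⟩

end Residues

section LatticeRepresentative

variable {ι R : Type*} [Fintype ι] [Ring R] [LinearOrder R] [FloorRing R] {S : ι → R}

/-- The integers `K` for which the points `K / n`, with `n` the cardinality of `ι`, have the same
floors as the points of the family `S` and fractional parts in the same order. -/
def latticeRepresentative (S : ι → R) (a : ι) : ℤ :=
  Fintype.card ι * ⌊S a⌋ + valueRank (fun b => Int.fract (S b)) a

theorem latticeRepresentative_ediv_and_emod (S : ι → R) (a : ι) :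
    latticeRepresentative S a / Fintype.card ι = ⌊S a⌋ ∧
      latticeRepresentative S a % Fintype.card ι = valueRank (fun b => Int.fract (S b)) a := by
  have hrank := valueRank_lt_card (fun b => Int.fract (S b)) a
  rw [Int.ediv_emod_unique (by lia), latticeRepresentative]
  exact ⟨add_comm _ _, by positivity, by exact_mod_cast hrank⟩

theorem eq_latticeRepresentative {K : ι → ℤ} (hK : Injective fun a => K a % Fintype.card ι)
    (hfloor : ∀ a, ⌊S a⌋ = K a / Fintype.card ι)
    (hlt : ∀ a b, Int.fract (S a) < Int.fract (S b) ↔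
      K a % Fintype.card ι < K b % Fintype.card ι) :
    K = latticeRepresentative S := by
  ext a
  have hcard : (0 : ℤ) < Fintype.card ι := by exact_mod_cast Fintype.card_pos_iff.mpr ⟨a⟩
  have hmem (b : ι) : K b % Fintype.card ι ∈ Ico (0 : ℤ) (Fintype.card ι) :=
    mem_Ico.mpr ⟨Int.emod_nonneg _ hcard.ne', Int.emod_lt_of_pos _ hcard⟩
  rw [latticeRepresentative, valueRank_congr hlt, valueRank_eq_self hK hmem, hfloor,
    Int.mul_ediv_add_emod]

theorem latticeRepresentative_emod_lt_iff {a b : ι} :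
    latticeRepresentative S a % Fintype.card ι < latticeRepresentative S b % Fintype.card ι ↔
      Int.fract (S a) < Int.fract (S b) := by
  rw [(latticeRepresentative_ediv_and_emod S a).2, (latticeRepresentative_ediv_and_emod S b).2,
    Nat.cast_lt, valueRank_lt_valueRank_iff]

theorem injective_latticeRepresentative_emod (hS : Injective fun a => Int.fract (S a)) :
    Injective fun a => latticeRepresentative S a % Fintype.card ι :=
  injective_of_lt_iff_lt hS fun _ _ => latticeRepresentative_emod_lt_iff.symm

theorem latticeRepresentative_eq_zero [IsStrictOrderedRing R] {a : ι} (ha : S a = 0) :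
    latticeRepresentative S a = 0 := by
  simp [latticeRepresentative, valueRank, ha, (Int.fract_nonneg _).not_gt]

end LatticeRepresentative

theorem eq_latticeRepresentative_iff {ι R : Type*} [Fintype ι] [LinearOrder ι] [OrderBot ι]
    [Field R] [LinearOrder R] [IsStrictOrderedRing R] [FloorRing R] {S : ι → R} {K : ι → ℤ}
    (hS₀ : S ⊥ = 0) (hK₀ : K ⊥ = 0) (hS : ∀ a b, a < b → ¬ ∃ z : ℤ, S b - S a = z) :
    K = latticeRepresentative S ↔
      (∀ a b, a < b → ¬ (Fintype.card ι : ℤ) ∣ K b - K a) ∧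
        ∀ a b, a < b → ⌈S b - S a⌉ = ⌈((K b - K a : ℤ) : R) / Fintype.card ι⌉ := by
  have hcard : 0 < Fintype.card ι := Fintype.card_pos
  rw [← injective_fract_iff] at hS
  rw [← injective_emod_iff]
  have hchamber (hK : Injective fun a => K a % Fintype.card ι) :=
    forall_lt_ceil_sub_eq_iff (T := fun a => (K a : R) / Fintype.card ι) hS₀ (by simp [hK₀]) hS
      (injective_fract_intCast_div hcard hK)
  simp only [← sub_div, ← Int.cast_sub, Int.floor_div_natCast, Int.floor_intCast,
    fract_intCast_div_lt_iff hcard] at hchamber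
  refine ⟨?_, fun ⟨hK, hceil⟩ => ?_⟩
  · rintro rfl
    have hK := injective_latticeRepresentative_emod hS
    exact ⟨hK, (hchamber hK).mpr ⟨fun a => (latticeRepresentative_ediv_and_emod S a).1.symm,
      fun _ _ => latticeRepresentative_emod_lt_iff.symm⟩⟩
  · obtain ⟨hfloor, hlt⟩ := (hchamber hK).mp hceil
    exact eq_latticeRepresentative hK hfloor hlt

section PartialSum

variable {m : ℕ} {M : Type*} [AddCommGroup M]

theorem sum_Icc_eq_partialSum_sub (f : Fin m → M) {r s : Fin m} (hrs : r ≤ s) :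
    ∑ i ∈ Icc r s, f i = Fin.partialSum f s.succ - Fin.partialSum f r.castSucc := by
  rw [← Fin.sum_Icc_sub hrs]
  simp only [Fin.partialSum_succ, add_sub_cancel_left]

theorem existsUnique_partialSum_eq {F : Fin (m + 1) → M} (hF : F 0 = 0) :
    ∃! f : Fin m → M, Fin.partialSum f = F := by
  refine ⟨fun i => -F i.castSucc + F i.succ, ?_, ?_⟩
  · simpa [hF] using Fin.partialSum_left_neg F
  · rintro f rfl
    exact funext fun i => (Fin.partialSum_right_neg f i).symm

theorem forall_lt_iff_forall_castSucc_succ {P : Fin (m + 1) → Fin (m + 1) → Prop} :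
    (∀ a b, a < b → P a b) ↔ ∀ r s : Fin m, r ≤ s → P r.castSucc s.succ := by
  refine ⟨fun h r s hrs => h _ _ (Fin.castSucc_lt_succ_iff.mpr hrs), fun h a b hab => ?_⟩
  obtain ⟨r, rfl⟩ := Fin.exists_castSucc_eq.mpr (Fin.ne_last_of_lt hab)
  obtain ⟨s, rfl⟩ := Fin.exists_succ_eq.mpr (Fin.ne_zero_of_lt hab)
  exact h r s (Fin.castSucc_lt_succ_iff.mp hab)

end PartialSum

theorem unique_rational_representative_in_chamber_general {R : Type*} [Field R] [LinearOrder R]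
    [IsStrictOrderedRing R] [FloorRing R] {m : ℕ} (q : Fin m → R)
    (hgen : ∀ r s : Fin m, r ≤ s → ¬ ∃ z : ℤ, ∑ i ∈ Icc r s, q i = z) :
    ∃! k : Fin m → ℤ,
      (∀ r s : Fin m, r ≤ s → ¬ ((m + 1 : ℕ) : ℤ) ∣ ∑ i ∈ Icc r s, k i) ∧
      ∀ r s : Fin m, r ≤ s →
        ⌈∑ i ∈ Icc r s, q i⌉ = ⌈(∑ i ∈ Icc r s, (k i : R)) / (m + 1 : ℕ)⌉ := by
  have hS₀ : Fin.partialSum q ⊥ = 0 := Fin.partialSum_zero q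
  have hS : ∀ a b, a < b → ¬ ∃ z : ℤ, Fin.partialSum q b - Fin.partialSum q a = z :=
    forall_lt_iff_forall_castSucc_succ.mpr fun r s hrs =>
      sum_Icc_eq_partialSum_sub q hrs ▸ hgen r s hrs
  refine (existsUnique_congr fun k => ?_).mp
    (existsUnique_partialSum_eq (latticeRepresentative_eq_zero hS₀))
  rw [eq_latticeRepresentative_iff hS₀ (Fin.partialSum_zero k) hS, Fintype.card_fin,
    forall_lt_iff_forall_castSucc_succ, forall_lt_iff_forall_castSucc_succ]
  simp +contextual only [← sum_Icc_eq_partialSum_sub, Int.cast_sum]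

/-- Each chamber of the arrangement `{∑_{i=r}^{s} q_i = m}` in the cube `[0,1)^{n-1}`
contains exactly one point with coordinates in `(1/n)·{1,…,n−1}` satisfying the same
generality condition: given `(q_1,…,q_{n−1}) ∈ [0,1)^{n−1}` with `∑_{i=r}^{s} q_i ∉ ℤ`
for all `1 ≤ r ≤ s ≤ n−1`, there is a unique integer tuple `(k_1,…,k_{n−1})` with
`k_i ∈ {1,…,n−1}`, with `n ∤ ∑_{i=r}^{s} k_i` for all `r ≤ s`, and with
`⌈∑_{i=r}^{s} q_i⌉ = ⌈∑_{i=r}^{s} k_i/n⌉` for all `r ≤ s`. -/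
theorem unique_rational_representative_in_chamber (n : ℕ) (hn : 2 ≤ n)
    (q : Fin (n - 1) → ℝ) (hq0 : ∀ i, 0 ≤ q i) (hq1 : ∀ i, q i < 1)
    (hgen : ∀ r s : Fin (n - 1), r ≤ s →
      ¬ ∃ m : ℤ, ∑ i ∈ Finset.Icc r s, q i = (m : ℝ)) :
    ∃! k : Fin (n - 1) → ℤ,
      (∀ i, 1 ≤ k i ∧ k i ≤ (n : ℤ) - 1) ∧
      (∀ r s : Fin (n - 1), r ≤ s → ¬ ((n : ℤ) ∣ ∑ i ∈ Finset.Icc r s, k i)) ∧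
      (∀ r s : Fin (n - 1), r ≤ s →
        ⌈∑ i ∈ Finset.Icc r s, q i⌉ = ⌈(∑ i ∈ Finset.Icc r s, (k i : ℝ)) / (n : ℝ)⌉) := by
  obtain ⟨m, rfl⟩ := Nat.exists_eq_add_of_le' (one_le_two.trans hn)
  refine (existsUnique_congr fun k => (and_iff_right_of_imp fun ⟨hdvd, hceil⟩ i => ?_).symm).mp
    (unique_rational_representative_in_chamber_general q hgen)
  exact one_le_and_le_sub_one_of_ceil_eq_ceil_div m.succ_pos (hq0 i) (hq1 i)
    (by simpa using hgen i i le_rfl) (by simpa using hdvd i i le_rfl)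
    (by simpa using hceil i i le_rfl)
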